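/- Fix T > 0, M > 0, and sequences (η_k)_{k≥1} and (h_k)_{k≥1} of positive real numbers. Let K be the set of all f ∈ L²((0,1); C([0,T],ℝ)) such that: (L1) ∫₀¹ ‖f(u)‖²_{C[0,T]} du ≤ M; (L2) for every k ≥ 1, ∫₀¹ sup{|f(u)(t₂) − f(u)(t₁)| : t₁, t₂ ∈ [0,T], |t₂ − t₁| < η_k} du ≤ 1/k; (L3) for every k ≥ 1 and every h ∈ (0, h_k), ∫₀^{1−h} ‖f(u+h) − f(u)‖²_{C[0,T]} du ≤ 1/k. Then K is a compact subset of L²((0,1); C([0,T],ℝ)). -/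

import Mathlib

open MeasureTheory Filter Topology Set
open scoped ENNReal NNReal

theorem fatou_aux {α : Type*} [MeasurableSpace α] {μ : Measure α} (F : ℕ → α → ℝ) (G : α → ℝ) (c : ℝ)
    (hF : ∀ n, Integrable (F n) μ) (h0 : ∀ n x, 0 ≤ F n x) (hc : ∀ n, ∫ x, F n x ∂μ ≤ c)
    (hG0 : ∀ x, 0 ≤ G x) (hlim : ∀ᵐ x ∂μ, Tendsto (fun n => F n x) atTop (𝓝 (G x))) :
    ∫ x, G x ∂μ ≤ c := by
  have hGm : AEStronglyMeasurable G μ :=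
    aestronglyMeasurable_of_tendsto_ae atTop (fun n => (hF n).1) hlim
  have hc0 : 0 ≤ c := (integral_nonneg (h0 0)).trans (hc 0)
  rw [integral_eq_lintegral_of_nonneg_ae (Eventually.of_forall hG0) hGm]
  refine ENNReal.toReal_le_of_le_ofReal hc0 ?_
  calc ∫⁻ x, ENNReal.ofReal (G x) ∂μ
      = ∫⁻ x, liminf (fun n => ENNReal.ofReal (F n x)) atTop ∂μ := by
        refine lintegral_congr_ae ?_
        filter_upwards [hlim] with x hx
        exact ((ENNReal.continuous_ofReal.tendsto _).comp hx).liminf_eq.symm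
    _ ≤ liminf (fun n => ∫⁻ x, ENNReal.ofReal (F n x) ∂μ) atTop :=
        lintegral_liminf_le' (fun n => (hF n).1.aemeasurable.ennreal_ofReal)
    _ ≤ ENNReal.ofReal c := by
        refine liminf_le_of_le (by isBoundedDefault) ?_
        intro b hb
        obtain ⟨n, hn⟩ := hb.exists
        refine hn.trans ?_
        rw [← ofReal_integral_eq_lintegral_ofReal (hF n) (Eventually.of_forall (h0 n))]
        exact ENNReal.ofReal_le_ofReal (hc n)

/-- oscillation -/
noncomputable def oscT (T η : ℝ) (g : C(Set.Icc (0:ℝ) T, ℝ)) : ℝ :=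
  sSup {x : ℝ | ∃ t₁ t₂ : Set.Icc (0:ℝ) T, |(t₂ : ℝ) - (t₁ : ℝ)| < η ∧ x = |g t₂ - g t₁|}

theorem osc_elt (T : ℝ) (g : C(Set.Icc (0:ℝ) T, ℝ)) (a b : Set.Icc (0:ℝ) T) :
    |g b - g a| ≤ 2 * ‖g‖ := by
  have h1 := g.norm_coe_le_norm a
  have h2 := g.norm_coe_le_norm b
  have := norm_sub_le (g b) (g a)
  rw [Real.norm_eq_abs (g b - g a)] at this
  linarith

theorem le_osc (T η : ℝ) (g : C(Set.Icc (0:ℝ) T, ℝ)) (a b : Set.Icc (0:ℝ) T)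
    (hab : |(b : ℝ) - (a : ℝ)| < η) : |g b - g a| ≤ oscT T η g := by
  refine le_csSup ⟨2 * ‖g‖, ?_⟩ ⟨a, b, hab, rfl⟩
  rintro x ⟨a, b, -, rfl⟩
  exact osc_elt T g a b

theorem osc_nonneg (T η : ℝ) (g : C(Set.Icc (0:ℝ) T, ℝ)) : 0 ≤ oscT T η g := by
  refine Real.sSup_nonneg ?_
  rintro x ⟨a, b, -, rfl⟩
  positivity

theorem osc_le (T η : ℝ) (g : C(Set.Icc (0:ℝ) T, ℝ)) : oscT T η g ≤ 2 * ‖g‖ := by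
  refine Real.sSup_le ?_ (by positivity)
  rintro x ⟨a, b, -, rfl⟩
  exact osc_elt T g a b

theorem osc_le_add (T η : ℝ) (g g' : C(Set.Icc (0:ℝ) T, ℝ)) :
    oscT T η g ≤ oscT T η g' + 2 * ‖g - g'‖ := by
  refine Real.sSup_le ?_ (add_nonneg (osc_nonneg T η g') (by positivity))
  rintro x ⟨a, b, hab, rfl⟩
  have h1 := le_osc T η g' a b hab
  have h2 := osc_elt T (g - g') a b
  have h3 := abs_add_le (g' b - g' a) ((g - g') b - (g - g') a)
  have : (g' b - g' a) + ((g - g') b - (g - g') a) = g b - g a := by simp; ring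
  rw [this] at h3
  linarith

theorem osc_cont (T η : ℝ) : Continuous (oscT T η) := by
  refine (LipschitzWith.of_dist_le_mul (K := 2) fun g g' => ?_).continuous
  rw [Real.dist_eq, dist_eq_norm, abs_le]
  have h1 := osc_le_add T η g g'
  have h2 := osc_le_add T η g' g
  rw [norm_sub_rev] at h2
  push_cast
  constructor <;> linarith

theorem ascoli_aux (T R : ℝ) (η : ℕ → ℝ) (hη : ∀ k : ℕ, 1 ≤ k → 0 < η k) (N : ℝ) (hN : 0 < N) :
    TotallyBounded {g : C(Set.Icc (0:ℝ) T, ℝ) | ‖g‖ ≤ R ∧ ∀ k : ℕ, 1 ≤ k →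
      ∀ a b : Set.Icc (0:ℝ) T, |(b : ℝ) - (a : ℝ)| < η k → |g b - g a| ≤ N / k} := by
  set S := {g : C(Set.Icc (0:ℝ) T, ℝ) | ‖g‖ ≤ R ∧ ∀ k : ℕ, 1 ≤ k →
      ∀ a b : Set.Icc (0:ℝ) T, |(b : ℝ) - (a : ℝ)| < η k → |g b - g a| ≤ N / k} with hS
  let e := ContinuousMap.isometryEquivBoundedOfCompact (Set.Icc (0:ℝ) T) ℝ
  have hc : IsCompact (closure (e '' S)) := by
    refine BoundedContinuousFunction.arzela_ascoli (Metric.closedBall (0:ℝ) R)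
      (isCompact_closedBall _ _) _ ?_ ?_
    · rintro _ x ⟨g, hg, rfl⟩
      rw [mem_closedBall_zero_iff]
      exact (g.norm_coe_le_norm x).trans hg.1
    · refine fun x => Metric.equicontinuousAt_iff.2 fun ε hε => ?_
      obtain ⟨k, hk⟩ := exists_nat_gt (N / ε)
      have hk0 : (0:ℝ) < k := (by positivity : 0 < N / ε).trans hk
      have hk1 : 1 ≤ k := Nat.one_le_iff_ne_zero.2 (by rintro rfl; simp at hk0)
      refine ⟨η k, hη k hk1, ?_⟩
      rintro y hy ⟨_, g, hg, rfl⟩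
      have h3 := hg.2 k hk1 y x (by rw [Subtype.dist_eq, Real.dist_eq, abs_sub_comm] at hy; exact hy)
      have h4 : dist (g x) (g y) ≤ N / k := by rw [Real.dist_eq]; exact h3
      refine lt_of_le_of_lt h4 ?_
      rw [div_lt_iff₀ hε] at hk
      rw [div_lt_iff₀ hk0]; linarith
  have h1 : TotallyBounded (e '' S) := hc.totallyBounded.subset subset_closure
  have h2 := h1.image e.symm.isometry.uniformContinuous
  refine h2.subset ?_
  rintro g hg
  exact ⟨e g, ⟨g, hg, rfl⟩, e.symm_apply_apply g⟩

theorem jensen_aux {E : Type*} [NormedAddCommGroup E] [NormedSpace ℝ E]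
    (ν : Measure ℝ) [IsProbabilityMeasure ν] (g : ℝ → E) (hg : AEStronglyMeasurable g ν) :
    ‖∫ v, g v ∂ν‖ₑ ^ 2 ≤ ∫⁻ v, ‖g v‖ₑ ^ 2 ∂ν := by
  have h1 : ‖∫ v, g v ∂ν‖ₑ ≤ eLpNorm g 1 ν := by
    rw [eLpNorm_one_eq_lintegral_enorm]; exact enorm_integral_le_lintegral_enorm g
  have h2 : eLpNorm g 1 ν ≤ eLpNorm g 2 ν :=
    eLpNorm_le_eLpNorm_of_exponent_le (by norm_num) hg
  have h3 : eLpNorm g 2 ν ^ 2 = ∫⁻ v, ‖g v‖ₑ ^ 2 ∂ν := by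
    have := eLpNorm_nnreal_pow_eq_lintegral (μ := ν) (f := g) (p := 2) (by norm_num)
    simpa using this
  rw [← h3]
  gcongr
  exact h1.trans h2

theorem cell_aux {E : Type*} [NormedAddCommGroup E] [NormedSpace ℝ E] [CompleteSpace E]
    (f : ℝ → E) (hf : StronglyMeasurable f) (hfi : IntegrableOn f (Ioo 0 1)) (N : ℕ) (hN : 0 < N)
    (u : ℝ) (hu : u ∈ Ioo (0:ℝ) 1) :
    ‖f u - (N:ℝ) • ∫ v in Ioo ((⌊N * u⌋₊ : ℝ) / N) ((⌊N * u⌋₊ : ℝ) / N + 1 / N), f v‖ₑ ^ 2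
    ≤ N * ∫⁻ s in Ioo (-(1 / N : ℝ)) (1 / N),
      (Ioo (0:ℝ) 1 ×ˢ Ioo (0:ℝ) 1).indicator (fun p => ‖f p.1 - f p.2‖ₑ ^ 2) (u, u + s) := by
  have hN' : (0:ℝ) < N := by exact_mod_cast hN
  set j := ⌊N * u⌋₊ with hj
  have hj1 : (j:ℝ) ≤ N * u := Nat.floor_le (by have := hu.1; positivity)
  have hj2 : N * u < j + 1 := Nat.lt_floor_add_one _
  have hj3 : j < N := by
    have : (j:ℝ) < N := by nlinarith [hu.2]
    exact_mod_cast this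
  have hj4 : (j:ℝ) + 1 ≤ N := by exact_mod_cast hj3
  set a : ℝ := (j:ℝ) / N with ha
  have ha0 : 0 ≤ a := by positivity
  have ha1 : a + 1 / N ≤ 1 := by
    rw [ha, ← add_div, div_le_one hN']; exact hj4
  have hau : a ≤ u := by rw [ha, div_le_iff₀ hN']; linarith
  have hua : u < a + 1 / N := by rw [ha, ← add_div, lt_div_iff₀ hN']; linarith
  set I := Ioo a (a + 1 / N) with hI
  have hI01 : I ⊆ Ioo 0 1 := fun v hv => ⟨ha0.trans_lt hv.1, hv.2.trans_le ha1⟩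
  have hvol : volume I = ENNReal.ofReal (1 / N) := by rw [hI, Real.volume_Ioo]; congr 1; ring
  let ν : Measure ℝ := (ENNReal.ofReal N) • volume.restrict I
  have hν : IsProbabilityMeasure ν := ⟨by
    simp only [ν, Measure.smul_apply, Measure.restrict_apply_univ, hvol, smul_eq_mul]
    rw [← ENNReal.ofReal_mul hN'.le, mul_one_div_cancel hN'.ne', ENNReal.ofReal_one]⟩
  have hfν : Integrable f ν := (hfi.mono_set hI01).smul_measure ENNReal.ofReal_ne_top
  have e1 : f u - (N:ℝ) • ∫ v in I, f v = ∫ v, (f u - f v) ∂ν := by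
    rw [integral_sub (integrable_const _) hfν, integral_const]
    simp only [probReal_univ, one_smul]
    simp only [ν]
    rw [integral_smul_measure, ENNReal.toReal_ofReal hN'.le]
  rw [e1]
  refine (jensen_aux ν _ (aestronglyMeasurable_const.sub hfν.1)).trans ?_
  simp only [ν]
  rw [lintegral_smul_measure, ENNReal.ofReal_natCast, smul_eq_mul]
  refine mul_le_mul_right ?_ _
  rw [← lintegral_indicator measurableSet_Ioo, ← lintegral_indicator measurableSet_Ioo,
    ← lintegral_add_left_eq_self _ u]
  refine lintegral_mono fun s => ?_
  by_cases hs : u + s ∈ I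
  · have h1 := hI01 hs
    have h2 : s ∈ Ioo (-(1 / N : ℝ)) (1 / N) := by
      have := hs.1; have := hs.2; constructor <;> linarith
    rw [indicator_of_mem hs, indicator_of_mem h2, indicator_of_mem (mk_mem_prod hu h1)]
    exact le_rfl
  · rw [indicator_of_notMem hs]; exact zero_le

theorem key_aux {E : Type*} [NormedAddCommGroup E] [NormedSpace ℝ E] [CompleteSpace E]
    (f : ℝ → E) (hf : StronglyMeasurable f) (hfi : IntegrableOn f (Ioo 0 1)) (N : ℕ) (hN : 0 < N)
    (δ : ℝ≥0∞)
    (H : ∀ s : ℝ, 0 < s → s < 1 / N → ∫⁻ u in Ioo 0 (1 - s), ‖f (u + s) - f u‖ₑ ^ 2 ≤ δ) :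
    ∫⁻ u in Ioo (0:ℝ) 1,
      ‖f u - (N:ℝ) • ∫ v in Ioo ((⌊N * u⌋₊ : ℝ) / N) ((⌊N * u⌋₊ : ℝ) / N + 1 / N), f v‖ₑ ^ 2
    ≤ 2 * δ := by
  have hN' : (0:ℝ) < N := by exact_mod_cast hN
  set G : ℝ → ℝ → ℝ≥0∞ := fun u v =>
    (Ioo (0:ℝ) 1 ×ˢ Ioo (0:ℝ) 1).indicator (fun p => ‖f p.1 - f p.2‖ₑ ^ 2) (u, v) with hGdef
  have hGm : Measurable (Function.uncurry G) := by
    have : Measurable (fun p : ℝ × ℝ => ‖f p.1 - f p.2‖ₑ ^ 2) :=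
      (((hf.comp_measurable measurable_fst).sub
        (hf.comp_measurable measurable_snd)).enorm).pow_const 2
    exact this.indicator (measurableSet_Ioo.prod measurableSet_Ioo)
  have hsymm : ∀ u v, G u v = G v u := by
    intro u v
    simp only [hGdef, indicator, mem_prod]
    rw [enorm_sub_rev]
    simp only [and_comm]
  have hD0 : ∫⁻ u, G u (u + 0) = 0 := by
    simp [hGdef, indicator]
  have hDpos : ∀ s : ℝ, 0 < s → s < 1 / N → ∫⁻ u, G u (u + s) ≤ δ := by
    intro s hs hsN
    refine le_trans ?_ (H s hs hsN)
    rw [← lintegral_indicator measurableSet_Ioo]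
    refine lintegral_mono fun u => ?_
    by_cases h : u ∈ Ioo (0:ℝ) 1 ∧ u + s ∈ Ioo (0:ℝ) 1
    · have h2 : u ∈ Ioo (0:ℝ) (1 - s) := ⟨h.1.1, by linarith [h.2.2]⟩
      simp only [hGdef]
      rw [indicator_of_mem h2, indicator_of_mem (mk_mem_prod h.1 h.2), enorm_sub_rev]
    · have : G u (u + s) = 0 := indicator_of_notMem (fun h' => h (mem_prod.1 h')) _
      rw [this]; exact zero_le
  have hDneg : ∀ s : ℝ, ∫⁻ u, G u (u + -s) = ∫⁻ u, G u (u + s) := by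
    intro s
    rw [← lintegral_add_right_eq_self _ s]
    refine lintegral_congr fun u => ?_
    rw [hsymm]; congr 1; ring
  have hD : ∀ s ∈ Ioo (-(1 / N : ℝ)) (1 / N), ∫⁻ u, G u (u + s) ≤ δ := by
    intro s hs
    rcases lt_trichotomy s 0 with h | h | h
    · rw [← hDneg]; exact hDpos _ (by linarith) (by linarith [hs.1])
    · rw [h, hD0]; exact zero_le
    · exact hDpos s h hs.2
  calc _ ≤ ∫⁻ u in Ioo (0:ℝ) 1, N * ∫⁻ s in Ioo (-(1 / N : ℝ)) (1 / N), G u (u + s) :=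
        setLIntegral_mono' measurableSet_Ioo fun u hu => cell_aux f hf hfi N hN u hu
    _ ≤ ∫⁻ u, N * ∫⁻ s in Ioo (-(1 / N : ℝ)) (1 / N), G u (u + s) := setLIntegral_le_lintegral _ _
    _ = N * ∫⁻ u, ∫⁻ s in Ioo (-(1 / N : ℝ)) (1 / N), G u (u + s) :=
        lintegral_const_mul' _ _ (by simp)
    _ = N * ∫⁻ s in Ioo (-(1 / N : ℝ)) (1 / N), ∫⁻ u, G u (u + s) := by
        rw [lintegral_lintegral_swap]
        have : Measurable (fun p : ℝ × ℝ => (p.1, p.1 + p.2)) := by fun_prop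
        exact (hGm.comp this).aemeasurable
    _ ≤ N * ∫⁻ s in Ioo (-(1 / N : ℝ)) (1 / N), δ := by
        refine mul_le_mul_right ?_ _
        exact setLIntegral_mono' measurableSet_Ioo hD
    _ = 2 * δ := by
        rw [setLIntegral_const, Real.volume_Ioo, mul_comm δ, ← mul_assoc, ← ENNReal.ofReal_natCast,
          ← ENNReal.ofReal_mul hN'.le]
        congr 1
        rw [show (N:ℝ) * (1 / N - -(1 / N)) = 2 by field_simp; norm_num]
        simp

theorem shift_mp (s : ℝ) : MeasurePreserving (fun x : ℝ => x + s)
    (volume.restrict (Ioo (0:ℝ) (1 - s))) (volume.restrict (Ioo s 1)) := by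
  have := (measurePreserving_add_right (volume : Measure ℝ) s).restrict_preimage
    (measurableSet_Ioo (a := s) (b := 1))
  rwa [Set.preimage_add_const_Ioo, sub_self] at this

theorem shift_int {E : Type*} [NormedAddCommGroup E] (f : ℝ → E)
    (hf : MemLp f 2 (volume.restrict (Ioo (0:ℝ) 1))) (s : ℝ) (hs : 0 < s) :
    Integrable (fun u => ‖f (u + s) - f u‖ ^ 2) (volume.restrict (Ioo (0:ℝ) (1 - s))) := by
  have h1 : MemLp f 2 (volume.restrict (Ioo s 1)) :=
    hf.mono_measure (Measure.restrict_mono (Ioo_subset_Ioo_left hs.le) le_rfl)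
  have h2 : MemLp f 2 (volume.restrict (Ioo (0:ℝ) (1 - s))) :=
    hf.mono_measure (Measure.restrict_mono (Ioo_subset_Ioo_right (by linarith)) le_rfl)
  have h3 := (h1.comp_measurePreserving (shift_mp s)).sub h2
  exact MemLp.integrable_norm_pow (p := 2) (by exact_mod_cast h3) two_ne_zero

/-- step function map -/
noncomputable def cellIdx (n : ℕ) (u : ℝ) : Fin (n + 1) := Fin.ofNat (n + 1) ⌊((n + 1 : ℕ) : ℝ) * u⌋₊

theorem cellIdx_meas (n : ℕ) : Measurable (cellIdx n) := by
  have h1 : Measurable (fun u : ℝ => ⌊((n + 1 : ℕ) : ℝ) * u⌋₊) :=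
    Nat.measurable_floor.comp (measurable_const_mul _)
  exact (measurable_from_top (f := fun m : ℕ => Fin.ofNat (n + 1) m)).comp h1

theorem step_memLp {E : Type*} [NormedAddCommGroup E] (n : ℕ) (c : Fin (n + 1) → E) :
    MemLp (fun u => c (cellIdx n u)) 2 (volume.restrict (Ioo (0:ℝ) 1)) := by
  refine MemLp.of_bound ?_ ‖c‖ (Eventually.of_forall fun u => norm_le_pi_norm c _)
  exact ((StronglyMeasurable.of_discrete (f := c)).comp_measurable
    (cellIdx_meas n)).aestronglyMeasurable

theorem step_lip {E : Type*} [NormedAddCommGroup E] (n : ℕ) :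
    UniformContinuous (fun c : Fin (n + 1) → E => (step_memLp n c).toLp) := by
  refine (LipschitzWith.of_edist_le fun c c' => ?_).uniformContinuous
  rw [Lp.edist_toLp_toLp]
  refine (eLpNorm_le_of_ae_bound (C := ‖c - c'‖)
    (Eventually.of_forall fun u => norm_le_pi_norm (c - c') _)).trans ?_
  rw [Measure.restrict_apply_univ, Real.volume_Ioo, edist_dist, dist_eq_norm]
  simp

theorem stmt3 (T : ℝ) (hT : 0 < T) (M : ℝ) (hM : 0 < M)
    (η h : ℕ → ℝ) (hη : ∀ k : ℕ, 1 ≤ k → 0 < η k) (hh : ∀ k : ℕ, 1 ≤ k → 0 < h k) :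
    IsCompact {f : Lp C(Set.Icc (0:ℝ) T, ℝ) 2 (volume.restrict (Set.Ioo (0:ℝ) 1)) |
      (∫ u in Set.Ioo (0:ℝ) 1, ‖f u‖ ^ 2 ≤ M) ∧
      (∀ k : ℕ, 1 ≤ k →
        ∫ u in Set.Ioo (0:ℝ) 1,
          sSup {x : ℝ | ∃ t₁ t₂ : Set.Icc (0:ℝ) T,
            |(t₂ : ℝ) - (t₁ : ℝ)| < η k ∧ x = |f u t₂ - f u t₁|} ≤ 1 / (k : ℝ)) ∧
      (∀ k : ℕ, 1 ≤ k → ∀ h' : ℝ, 0 < h' → h' < h k →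
        ∫ u in Set.Ioo (0:ℝ) (1 - h'), ‖f (u + h') - f u‖ ^ 2 ≤ 1 / (k : ℝ))} := by
  have hmem : ∀ f : Lp C(Set.Icc (0:ℝ) T, ℝ) 2 (volume.restrict (Set.Ioo (0:ℝ) 1)),
    MemLp f 2 (volume.restrict (Set.Ioo (0:ℝ) 1)) := fun f => Lp.memLp f
  have hint : ∀ f : Lp C(Set.Icc (0:ℝ) T, ℝ) 2 (volume.restrict (Set.Ioo (0:ℝ) 1)),
    Integrable f (volume.restrict (Set.Ioo (0:ℝ) 1)) :=
    fun f => (hmem f).integrable (by norm_num)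
  have hsq : ∀ f : Lp C(Set.Icc (0:ℝ) T, ℝ) 2 (volume.restrict (Set.Ioo (0:ℝ) 1)),
    Integrable (fun u => ‖f u‖ ^ 2) (volume.restrict (Set.Ioo (0:ℝ) 1)) :=
    fun f => MemLp.integrable_norm_pow (p := 2) (by exact_mod_cast hmem f) two_ne_zero
  have hosc : ∀ (f : Lp C(Set.Icc (0:ℝ) T, ℝ) 2 (volume.restrict (Set.Ioo (0:ℝ) 1))) (e : ℝ),
    Integrable (fun u => oscT T e (f u)) (volume.restrict (Set.Ioo (0:ℝ) 1)) := by
    intro f e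
    refine ((hint f).norm.const_mul 2).mono'
      ((osc_cont T e).comp_aestronglyMeasurable (hint f).1) (Eventually.of_forall fun u => ?_)
    rw [Real.norm_of_nonneg (osc_nonneg _ _ _)]
    exact osc_le _ _ _
  refine TotallyBounded.isCompact_of_isClosed ?_ ?_
  · rw [Metric.totallyBounded_iff]
    intro ε hε
    obtain ⟨k, hk⟩ := exists_nat_gt (2 / (ε / 2) ^ 2)
    have hk0 : (0:ℝ) < k := (by positivity : 0 < 2 / (ε / 2) ^ 2).trans hk
    have hk1 : 1 ≤ k := Nat.one_le_iff_ne_zero.2 (by rintro rfl; simp at hk0)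
    have hkε : 2 * (1 / (k:ℝ)) < (ε / 2) ^ 2 := by
      rw [div_lt_iff₀ (by positivity)] at hk
      rw [mul_one_div, div_lt_iff₀ hk0]; linarith
    obtain ⟨n, hn⟩ := exists_nat_one_div_lt (hh k hk1)
    have hN' : (0:ℝ) < ((n + 1 : ℕ) : ℝ) := by positivity
    set N : ℕ := n + 1 with hN
    have hA := ascoli_aux T (N * (1 + M)) η hη N hN'
    set A := {g : C(Set.Icc (0:ℝ) T, ℝ) | ‖g‖ ≤ N * (1 + M) ∧ ∀ k : ℕ, 1 ≤ k →
      ∀ a b : Set.Icc (0:ℝ) T, |(b : ℝ) - (a : ℝ)| < η k → |g b - g a| ≤ N / k} with hAdef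
    have hAc : IsCompact (closure A) := hA.closure.isCompact_of_isClosed isClosed_closure
    have hP : IsCompact (Set.univ.pi fun _ : Fin (n + 1) => closure A) :=
      isCompact_univ_pi fun _ => hAc
    have hB := hP.totallyBounded.image (step_lip n)
    obtain ⟨t, htf, ht⟩ := Metric.totallyBounded_iff.1 hB (ε / 2) (by positivity)
    refine ⟨t, htf, ?_⟩
    rintro f ⟨h1, h2, h3⟩
    -- the averages
    let c : ℕ → C(Set.Icc (0:ℝ) T, ℝ) := fun j =>
      (N:ℝ) • ∫ v in Ioo ((j : ℝ) / N) ((j : ℝ) / N + 1 / N), f v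
    have hcA : ∀ j : ℕ, j < N → c j ∈ A := by
      intro j hj
      have hj4 : (j:ℝ) + 1 ≤ N := by exact_mod_cast hj
      have hI : Ioo ((j : ℝ) / N) ((j : ℝ) / N + 1 / N) ⊆ Ioo 0 1 := by
        refine Ioo_subset_Ioo (by positivity) ?_
        rw [← add_div, div_le_one hN']; exact hj4
      have hfI : IntegrableOn f (Ioo ((j : ℝ) / N) ((j : ℝ) / N + 1 / N)) :=
        IntegrableOn.mono_set (hint f) hI
      constructor
      · simp only [c]
        rw [norm_smul, Real.norm_of_nonneg hN'.le]
        refine mul_le_mul_of_nonneg_left ?_ hN'.le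
        calc _ ≤ ∫ v in Ioo ((j : ℝ) / N) ((j : ℝ) / N + 1 / N), ‖f v‖ :=
              norm_integral_le_integral_norm _
          _ ≤ ∫ v in Ioo (0:ℝ) 1, ‖f v‖ :=
              setIntegral_mono_set (hint f).norm (Eventually.of_forall fun v => norm_nonneg _)
                (Eventually.of_forall hI)
          _ ≤ ∫ v in Ioo (0:ℝ) 1, (1 + ‖f v‖ ^ 2) :=
              integral_mono (hint f).norm ((integrable_const _).add (hsq f))
                fun v => by nlinarith [sq_nonneg (‖f v‖ - 1), norm_nonneg (f v)]
          _ ≤ 1 + M := by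
              rw [integral_add (integrable_const _) (hsq f)]
              simp
              exact h1
      · intro k' hk' a b hab
        have e1 : c j b - c j a = N * ∫ v in Ioo ((j : ℝ) / N) ((j : ℝ) / N + 1 / N),
            (f v b - f v a) := by
          have i1 : ∀ y, Integrable (fun v => f v y)
              (volume.restrict (Ioo ((j : ℝ) / N) ((j : ℝ) / N + 1 / N))) := fun y =>
            (ContinuousMap.evalCLM ℝ y).integrable_comp hfI
          rw [integral_sub (i1 b) (i1 a)]
          simp only [c, ContinuousMap.smul_apply, smul_eq_mul]
          rw [ContinuousMap.integral_apply hfI, ContinuousMap.integral_apply hfI, mul_sub]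
        rw [e1, abs_mul, abs_of_pos hN', div_eq_mul_one_div (N : ℝ) (k' : ℝ)]
        refine mul_le_mul_of_nonneg_left ?_ hN'.le
        calc |∫ v in Ioo ((j : ℝ) / N) ((j : ℝ) / N + 1 / N), (f v b - f v a)|
            ≤ ∫ v in Ioo ((j : ℝ) / N) ((j : ℝ) / N + 1 / N), oscT T (η k') (f v) := by
              rw [← Real.norm_eq_abs]
              refine norm_integral_le_of_norm_le (IntegrableOn.mono_set (hosc f _) hI)
                (Eventually.of_forall fun v => ?_)
              exact le_osc T _ (f v) a b hab
          _ ≤ ∫ v in Ioo (0:ℝ) 1, oscT T (η k') (f v) :=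
              setIntegral_mono_set (hosc f _) (Eventually.of_forall fun v => osc_nonneg _ _ _)
                (Eventually.of_forall hI)
          _ ≤ 1 / k' := h2 k' hk'
    let c' : Fin (n + 1) → C(Set.Icc (0:ℝ) T, ℝ) := fun j => c j
    have hc' : (step_memLp n c').toLp ∈ (fun c : Fin (n + 1) → C(Set.Icc (0:ℝ) T, ℝ) =>
        (step_memLp n c).toLp) '' (Set.univ.pi fun _ : Fin (n + 1) => closure A) :=
      ⟨c', fun j _ => subset_closure (hcA j j.2), rfl⟩
    obtain ⟨y, hy, hyd⟩ := mem_iUnion₂.1 (ht hc')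
    refine mem_iUnion₂.2 ⟨y, hy, ?_⟩
    rw [Metric.mem_ball] at *
    suffices hd : dist f (step_memLp n c').toLp < ε / 2 by
      have := dist_triangle f (step_memLp n c').toLp y
      linarith
    have hkey := key_aux f (Lp.stronglyMeasurable f) (hint f) N (Nat.succ_pos n)
      (ENNReal.ofReal (1 / k)) (by
        intro s hs hsN
        have hsh : s < h k := hsN.trans (by rw [hN]; push_cast; exact hn)
        have h4 := h3 k hk1 s hs hsh
        have h5 := ofReal_integral_eq_lintegral_ofReal (shift_int f (hmem f) s hs)
          (Eventually.of_forall fun u => by positivity)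
        have h6 := ENNReal.ofReal_le_ofReal h4
        rw [h5] at h6
        refine le_trans (le_of_eq (lintegral_congr fun u => ?_)) h6
        rw [ENNReal.ofReal_pow (norm_nonneg _), ofReal_norm])
    have hnorm : edist f (step_memLp n c').toLp ^ 2 ≤ 2 * ENNReal.ofReal (1 / k) := by
      refine le_trans (le_of_eq ?_) hkey
      rw [Lp.edist_def]
      have h7 := eLpNorm_nnreal_pow_eq_lintegral (μ := volume.restrict (Ioo (0:ℝ) 1))
        (f := ⇑f - ⇑(step_memLp n c').toLp)
        (p := 2) (by norm_num)
      have h8 : eLpNorm (⇑f - ⇑(step_memLp n c').toLp) 2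
          (volume.restrict (Ioo (0:ℝ) 1)) ^ 2 = ∫⁻ u in Ioo (0:ℝ) 1,
          ‖(⇑f - ⇑(step_memLp n c').toLp) u‖ₑ ^ 2 := by
        simpa using h7
      rw [h8]
      refine lintegral_congr_ae ?_
      filter_upwards [(step_memLp n c').coeFn_toLp, ae_restrict_mem measurableSet_Ioo] with u hu hu1
      rw [Pi.sub_apply, hu]
      have h9 : ⌊(N : ℝ) * u⌋₊ < N := by
        rw [Nat.floor_lt (by have := hu1.1; positivity)]
        nlinarith [hu1.2]
      have h10 : ((cellIdx n u : Fin (n+1)) : ℕ) = ⌊(N : ℝ) * u⌋₊ := by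
        simp only [cellIdx, Fin.ofNat]
        exact Nat.mod_eq_of_lt h9
      simp only [c', h10, c]
    rw [← edist_lt_ofReal]
    by_contra hcon
    have h11 := pow_le_pow_left' (not_lt.1 hcon) 2
    have h12 := h11.trans hnorm
    rw [← ENNReal.ofReal_pow (by positivity), show (2:ℝ≥0∞) = ENNReal.ofReal 2 by simp,
      ← ENNReal.ofReal_mul (by norm_num), ENNReal.ofReal_le_ofReal_iff (by positivity)] at h12
    linarith
  · refine IsSeqClosed.isClosed ?_
    intro x f hx hxf
    obtain ⟨ns, -, hns⟩ := (tendstoInMeasure_of_tendsto_Lp hxf).exists_seq_tendsto_ae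
    refine ⟨?_, ?_, ?_⟩
    · refine fatou_aux (fun i u => ‖x (ns i) u‖ ^ 2) _ M (fun i => hsq _)
        (fun i u => by positivity) (fun i => (hx (ns i)).1) (fun u => by positivity) ?_
      filter_upwards [hns] with u hu
      exact hu.norm.pow 2
    · intro k hk
      refine fatou_aux (fun i u => oscT T (η k) (x (ns i) u)) (fun u => oscT T (η k) (f u)) _
        (fun i => hosc _ _)
        (fun i u => osc_nonneg _ _ _) (fun i => (hx (ns i)).2.1 k hk) (fun u => osc_nonneg _ _ _) ?_
      filter_upwards [hns] with u hu
      exact ((osc_cont T (η k)).tendsto _).comp hu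
    · intro k hk s hs hsk
      refine fatou_aux (fun i u => ‖x (ns i) (u + s) - x (ns i) u‖ ^ 2) _ _
        (fun i => shift_int _ (hmem _) s hs)
        (fun i u => by positivity) (fun i => (hx (ns i)).2.2 k hk s hs hsk)
        (fun u => by positivity) ?_
      have a1 := ae_restrict_of_ae_restrict_of_subset
        (Ioo_subset_Ioo hs.le le_rfl : Ioo s 1 ⊆ Ioo (0:ℝ) 1) hns
      have a2 := ae_restrict_of_ae_restrict_of_subset
        (Ioo_subset_Ioo le_rfl (by linarith) : Ioo (0:ℝ) (1 - s) ⊆ Ioo 0 1) hns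
      have a3 := (shift_mp s).quasiMeasurePreserving.ae a1
      filter_upwards [a2, a3] with u hu hu'
      exact (hu'.sub hu).norm.pow 2
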